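/- arXiv:1303.1284 — 2 statements merged into one kernel-verified Lean document; each statement's English description precedes it below -/
import Mathlib

section
/- Let ‖·‖_D be a D-norm on ℝ^d, generated by Z with independent copy Z', such that each bivariate projection is different from the bivariate sup-norm, i.e. for all 1 ≤ i < j ≤ d there exists (x, y) ∈ ℝ² with E(max(|x| Z_i, |y| Z_j)) ≠ max(|x|, |y|). Then ‖·‖_D is idempotent if and only if ‖x‖_D = Σ_{i=1}^d |x_i| for all x ∈ ℝ^d. -/
open MeasureTheory ProbabilityTheory

/-!
Write `‖x‖_D = E‖x Z‖_∞`, with products taken coordinatewise. Since `E Z = 1`, Jensen's inequality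
gives `‖x‖_∞ ≤ ‖x‖_D`, and by Fubini's theorem the D-norm generated by `Z Z'` maps `x` to
`E‖x Z'‖_D`. Hence idempotency, `E‖x Z'‖_D = E‖x Z'‖_∞`, forces `‖x Z'‖_D = ‖x Z'‖_∞` almost
surely, simultaneously for all `x` by continuity. Taking `x = 1 / Z'` on the support `S` of `Z'`
gives `E(max_{i ∈ S} Z_i) ≤ 1 = E(Z_j)` for `j ∈ S`, so all `Z_j` with `j ∈ S` agree almost surely.
If no two coordinates of `Z` agree almost surely, then `Z'` almost surely has at most one nonzero
coordinate, and this is equivalent to its D-norm being the L¹-norm. The converse holds because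
`Z Z'` inherits from `Z` the property of having at most one nonzero coordinate.
-/

section PiNorm

variable {ι : Type*} [Fintype ι] {E : ι → Type*}

theorem pi_norm_eq_iSup_norm [∀ i, SeminormedAddCommGroup (E i)] (v : ∀ i, E i) :
    ‖v‖ = ⨆ i, ‖v i‖ :=
  (PiLp.norm_toLp v).symm.trans (PiLp.norm_eq_ciSup _)

theorem pi_norm_le_sum_norm [∀ i, SeminormedAddCommGroup (E i)] (v : ∀ i, E i) :
    ‖v‖ ≤ ∑ i, ‖v i‖ :=
  (pi_norm_le_iff_of_nonneg (by positivity)).2 fun i ↦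
    Finset.single_le_sum (fun _ _ ↦ norm_nonneg _) (Finset.mem_univ i)

theorem pi_norm_eq_sum_norm_iff [∀ i, NormedAddCommGroup (E i)] (v : ∀ i, E i) :
    ‖v‖ = ∑ i, ‖v i‖ ↔ Pairwise fun i j ↦ v i = 0 ∨ v j = 0 := by
  refine ⟨fun h i j hij ↦ ?_, fun h ↦ (pi_norm_le_sum_norm v).antisymm ?_⟩
  · by_contra! ⟨hi, hj⟩
    have norm_lt_sum {k l : ι} (hlk : l ≠ k) (hl : v l ≠ 0) : ‖v k‖ < ∑ i, ‖v i‖ :=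
      Finset.single_lt_sum (f := (‖v ·‖)) hlk (Finset.mem_univ k) (Finset.mem_univ l)
        (norm_pos_iff.2 hl) fun _ _ _ ↦ norm_nonneg _
    refine h.not_lt ((pi_norm_lt_iff ((norm_nonneg _).trans_lt (norm_lt_sum hij hi))).2 fun k ↦ ?_)
    obtain rfl | hik := eq_or_ne i k
    · exact norm_lt_sum hij.symm hj
    · exact norm_lt_sum hik hi
  · by_cases hv : ∃ k, v k ≠ 0
    · obtain ⟨k, hk⟩ := hv
      rw [Fintype.sum_eq_single k fun i hik ↦ norm_eq_zero.2 ((h hik).resolve_right hk)]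
      exact norm_le_pi_norm v k
    · push Not at hv
      simp [hv]

end PiNorm

section Independence

variable {Ω : Type*} [MeasurableSpace Ω] {μ : Measure Ω}

theorem integrable_mul_of_indepFun {A : Type*} [NormedRing A] [NormedAlgebra ℝ A]
    [MeasurableSpace A] [OpensMeasurableSpace A] {X Y : Ω → A} (hXY : X ⟂ᵢ[μ] Y)
    (hX : Integrable X μ) (hY : Integrable Y μ) : Integrable (X * Y) μ :=
  hXY.integrable_bilin hX hY (ContinuousLinearMap.mul ℝ A)

theorem integral_mul_of_indepFun {A : Type*} [NormedRing A] [NormedAlgebra ℝ A] [CompleteSpace A]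
    [MeasurableSpace A] [BorelSpace A] {X Y : Ω → A} (hXY : X ⟂ᵢ[μ] Y)
    (hX : Integrable X μ) (hY : Integrable Y μ) :
    ∫ ω, (X * Y) ω ∂μ = (∫ ω, X ω ∂μ) * ∫ ω, Y ω ∂μ :=
  hXY.integral_bilin hX hY (ContinuousLinearMap.mul ℝ A)

theorem integral_comp_eq_integral_integral_of_indepFun {𝓧 𝓨 E : Type*}
    [MeasurableSpace 𝓧] [MeasurableSpace 𝓨] [NormedAddCommGroup E] [NormedSpace ℝ E]
    [IsFiniteMeasure μ] {X : Ω → 𝓧} {Y : Ω → 𝓨} {f : 𝓧 → 𝓨 → E}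
    (hXY : X ⟂ᵢ[μ] Y) (hX : AEMeasurable X μ) (hY : AEMeasurable Y μ)
    (hf : StronglyMeasurable f.uncurry) (hfXY : Integrable (fun ω ↦ f (X ω) (Y ω)) μ) :
    ∫ ω, f (X ω) (Y ω) ∂μ = ∫ ω, ∫ ω', f (X ω) (Y ω') ∂μ ∂μ := by
  have hlaw := hXY.map_prod_eq_prod_map_map hX hY
  have hint : Integrable f.uncurry ((μ.map X).prod (μ.map Y)) := by
    rw [← hlaw]
    exact (integrable_map_measure hf.aestronglyMeasurable (hX.prodMk hY)).2 hfXY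
  calc ∫ ω, f (X ω) (Y ω) ∂μ
      = ∫ p, f.uncurry p ∂μ.map fun ω ↦ (X ω, Y ω) :=
        (integral_map (hX.prodMk hY) hf.aestronglyMeasurable).symm
    _ = ∫ x, ∫ y, f x y ∂μ.map Y ∂μ.map X := by rw [hlaw, integral_prod _ hint]; rfl
    _ = ∫ ω, ∫ y, f (X ω) y ∂μ.map Y ∂μ :=
        integral_map hX hf.integral_prod_right.aestronglyMeasurable
    _ = ∫ ω, ∫ ω', f (X ω) (Y ω') ∂μ ∂μ := by
        congr! 2 with ω
        exact integral_map hY (hf.comp_measurable measurable_prodMk_left).aestronglyMeasurable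

end Independence

section DNorm

variable {ι Ω : Type*} [MeasurableSpace Ω] {μ : Measure Ω} {Z Z' : Ω → ι → ℝ}

/-- The bivariate projection `‖(x, y)‖_{D_{i,j}} = E(max(|x| Z_i, |y| Z_j))` of the D-norm generated
by `Z`. -/
noncomputable def dNormProj (μ : Measure Ω) (Z : Ω → ι → ℝ) (i j : ι) (x y : ℝ) : ℝ :=
  ∫ ω, max (|x| * Z ω i) (|y| * Z ω j) ∂μ

theorem dNormProj_swap (i j : ι) (x y : ℝ) : dNormProj μ Z i j x y = dNormProj μ Z j i y x := by
  simp only [dNormProj, max_comm]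

variable [Fintype ι]

/-- A generator of a D-norm: a random vector with almost surely nonnegative coordinates of mean
one. The conditions are stated for the vector `Z`, using the order and the integral of `ι → ℝ`. -/
structure IsDNormGenerator (μ : Measure Ω) (Z : Ω → ι → ℝ) : Prop where
  nonneg : 0 ≤ᵐ[μ] Z
  integrable : Integrable Z μ
  integral_eq_one : ∫ ω, Z ω ∂μ = 1

/-- The D-norm `‖x‖_D = E(max_i |x_i| Z_i)` generated by `Z`. The maximum is encoded as the sup norm
of the coordinatewise product `x * Z ω`, which agrees with it when `Z ω ≥ 0`. -/
noncomputable def dNorm (μ : Measure Ω) (Z : Ω → ι → ℝ) (x : ι → ℝ) : ℝ :=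
  ∫ ω, ‖x * Z ω‖ ∂μ

theorem integrable_norm_mul (hZ : Integrable Z μ) (x : ι → ℝ) :
    Integrable (fun ω ↦ ‖x * Z ω‖) μ :=
  (hZ.const_mul x).norm

theorem dNorm_nonneg (x : ι → ℝ) : 0 ≤ dNorm μ Z x :=
  integral_nonneg fun _ ↦ norm_nonneg _

theorem dNorm_le (hZ : Integrable Z μ) (x : ι → ℝ) : dNorm μ Z x ≤ dNorm μ Z 1 * ‖x‖ := by
  rw [dNorm, dNorm, ← integral_mul_const]
  refine integral_mono (integrable_norm_mul hZ x)
    ((integrable_norm_mul hZ 1).mul_const _) fun ω ↦ ?_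
  simpa [mul_comm] using norm_mul_le x (Z ω)

theorem dNorm_add_le (hZ : Integrable Z μ) (x y : ι → ℝ) :
    dNorm μ Z (x + y) ≤ dNorm μ Z x + dNorm μ Z y := by
  rw [dNorm, dNorm, dNorm, ← integral_add (integrable_norm_mul hZ x) (integrable_norm_mul hZ y)]
  refine integral_mono (integrable_norm_mul hZ _)
    ((integrable_norm_mul hZ x).add (integrable_norm_mul hZ y)) fun ω ↦ ?_
  simpa [add_mul] using norm_add_le (x * Z ω) (y * Z ω)

theorem continuous_dNorm (hZ : Integrable Z μ) : Continuous (dNorm μ Z) := by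
  refine (LipschitzWith.of_le_add_mul' (dNorm μ Z 1) fun x y ↦ ?_).continuous
  calc dNorm μ Z x = dNorm μ Z (y + (x - y)) := by rw [add_sub_cancel]
    _ ≤ dNorm μ Z y + dNorm μ Z (x - y) := dNorm_add_le hZ y (x - y)
    _ ≤ dNorm μ Z y + dNorm μ Z 1 * dist x y := by
      rw [dist_eq_norm]
      gcongr
      exact dNorm_le hZ (x - y)

theorem integrable_dNorm_mul (hZ : Integrable Z μ) (hZ' : Integrable Z' μ) (x : ι → ℝ) :
    Integrable (fun ω ↦ dNorm μ Z (x * Z' ω)) μ := by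
  refine ((integrable_norm_mul hZ' x).const_mul (dNorm μ Z 1)).mono'
    ((continuous_dNorm hZ).comp_aestronglyMeasurable
      (hZ'.const_mul x).aestronglyMeasurable) (.of_forall fun ω ↦ ?_)
  rw [Real.norm_of_nonneg (dNorm_nonneg _)]
  exact dNorm_le hZ _

theorem dNorm_eq_of_identDistrib {Ω' : Type*} [MeasurableSpace Ω'] {ν : Measure Ω'}
    {W : Ω' → ι → ℝ} (h : IdentDistrib W Z ν μ) : dNorm ν W = dNorm μ Z :=
  funext fun x ↦ (h.comp (u := fun z ↦ ‖x * z‖) (by fun_prop)).integral_eq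

theorem dNorm_mul_of_indepFun [IsFiniteMeasure μ] (hZ : Integrable Z μ) (hZ' : Integrable Z' μ)
    (hind : Z ⟂ᵢ[μ] Z') (x : ι → ℝ) :
    dNorm μ (Z * Z') x = ∫ ω, dNorm μ Z (x * Z' ω) ∂μ := by
  have hswap (ω : Ω) : x * (Z * Z') ω = x * Z' ω * Z ω := by
    rw [Pi.mul_apply, mul_assoc, mul_comm (Z ω)]
  simp only [dNorm, hswap]
  refine integral_comp_eq_integral_integral_of_indepFun (f := fun z' z ↦ ‖x * z' * z‖) hind.symm
    hZ'.aemeasurable hZ.aemeasurable (Continuous.stronglyMeasurable (by fun_prop)) ?_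
  simpa only [hswap] using integrable_norm_mul (integrable_mul_of_indepFun hind hZ hZ') x

namespace IsDNormGenerator

theorem of_eval (hnonneg : ∀ i, ∀ᵐ ω ∂μ, 0 ≤ Z ω i) (hint : ∀ i, Integrable (Z · i) μ)
    (hmean : ∀ i, ∫ ω, Z ω i ∂μ = 1) : IsDNormGenerator μ Z where
  nonneg := ae_all_iff.2 hnonneg
  integrable := .of_eval hint
  integral_eq_one := funext fun i ↦ (eval_integral hint i).trans (hmean i)

theorem of_identDistrib {Ω' : Type*} [MeasurableSpace Ω'] {ν : Measure Ω'} {W : Ω' → ι → ℝ}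
    (hZ : IsDNormGenerator μ Z) (h : IdentDistrib W Z ν μ) : IsDNormGenerator ν W where
  nonneg := h.symm.ae_snd measurableSet_Ici hZ.nonneg
  integrable := h.integrable_iff.2 hZ.integrable
  integral_eq_one := h.integral_eq.trans hZ.integral_eq_one

theorem mul (hZ : IsDNormGenerator μ Z) (hZ' : IsDNormGenerator μ Z') (hind : Z ⟂ᵢ[μ] Z') :
    IsDNormGenerator μ (Z * Z') where
  nonneg := by filter_upwards [hZ.nonneg, hZ'.nonneg] with ω h h' using mul_nonneg h h'
  integrable := integrable_mul_of_indepFun hind hZ.integrable hZ'.integrable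
  integral_eq_one := by
    rw [integral_mul_of_indepFun hind hZ.integrable hZ'.integrable, hZ.integral_eq_one,
      hZ'.integral_eq_one, one_mul]

theorem integral_eval (hZ : IsDNormGenerator μ Z) (i : ι) : ∫ ω, Z ω i ∂μ = 1 := by
  rw [← eval_integral hZ.integrable.eval, hZ.integral_eq_one, Pi.one_apply]

theorem integral_iSup_eq_dNorm (hZ : IsDNormGenerator μ Z) (x : ι → ℝ) :
    ∫ ω, ⨆ i, |x i| * Z ω i ∂μ = dNorm μ Z x := by
  refine integral_congr_ae ?_
  filter_upwards [hZ.nonneg] with ω hω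
  simp only [pi_norm_eq_iSup_norm, Pi.mul_apply, norm_mul, Real.norm_eq_abs, abs_of_nonneg (hω _)]

theorem norm_le_dNorm (hZ : IsDNormGenerator μ Z) (x : ι → ℝ) : ‖x‖ ≤ dNorm μ Z x :=
  calc ‖x‖ = ‖∫ ω, x * Z ω ∂μ‖ := by
        rw [integral_const_mul_of_integrable hZ.integrable, hZ.integral_eq_one, mul_one]
    _ ≤ dNorm μ Z x := norm_integral_le_integral_norm _

theorem integral_sum_norm_mul (hZ : IsDNormGenerator μ Z) (x : ι → ℝ) :
    ∫ ω, ∑ i, ‖(x * Z ω) i‖ ∂μ = ∑ i, |x i| := by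
  have hmean (i : ι) : ∫ ω, |Z ω i| ∂μ = 1 := by
    rw [← hZ.integral_eval i]
    refine integral_congr_ae ?_
    filter_upwards [hZ.nonneg] with ω hω using abs_of_nonneg (hω i)
  rw [integral_finsetSum _ fun i _ ↦ ((hZ.integrable.const_mul x).eval i).norm]
  simp [integral_const_mul, hmean]

theorem dNorm_eq_sum_abs_iff (hZ : IsDNormGenerator μ Z) :
    (∀ x, dNorm μ Z x = ∑ i, |x i|) ↔ ∀ᵐ ω ∂μ, Pairwise fun i j ↦ Z ω i = 0 ∨ Z ω j = 0 := by
  refine ⟨fun h ↦ ?_, fun h x ↦ ?_⟩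
  · have hsum : Integrable (fun ω ↦ ∑ i, ‖((1 : ι → ℝ) * Z ω) i‖) μ :=
      integrable_finsetSum _ fun i _ ↦ ((hZ.integrable.const_mul 1).eval i).norm
    have heq := (integral_eq_iff_of_ae_le (integrable_norm_mul hZ.integrable 1) hsum
      (.of_forall fun ω ↦ pi_norm_le_sum_norm (1 * Z ω))).1
      ((h 1).trans (hZ.integral_sum_norm_mul 1).symm)
    filter_upwards [heq] with ω hω
    simpa only [one_mul] using (pi_norm_eq_sum_norm_iff (1 * Z ω)).1 hω
  · rw [← hZ.integral_sum_norm_mul x]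
    refine integral_congr_ae ?_
    filter_upwards [h] with ω hω
    refine (pi_norm_eq_sum_norm_iff (x * Z ω)).2 (hω.mono fun i j hij ↦ ?_)
    exact hij.imp (mul_eq_zero_of_right (x i)) (mul_eq_zero_of_right (x j))

theorem ae_forall_dNorm_mul_eq_norm [IsFiniteMeasure μ] (hZ : IsDNormGenerator μ Z)
    (hZ' : Integrable Z' μ) (hind : Z ⟂ᵢ[μ] Z') (hmul : dNorm μ (Z * Z') = dNorm μ Z') :
    ∀ᵐ ω ∂μ, ∀ x, dNorm μ Z (x * Z' ω) = ‖x * Z' ω‖ := by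
  have hx (x : ι → ℝ) : ∀ᵐ ω ∂μ, ‖x * Z' ω‖ = dNorm μ Z (x * Z' ω) := by
    refine (integral_eq_iff_of_ae_le (integrable_norm_mul hZ' x)
      (integrable_dNorm_mul hZ.integrable hZ' x) (.of_forall fun ω ↦ hZ.norm_le_dNorm _)).1 ?_
    rw [← dNorm_mul_of_indepFun hZ.integrable hZ' hind, hmul, dNorm]
  filter_upwards [ae_all_iff.2 fun n ↦ hx (TopologicalSpace.denseSeq (ι → ℝ) n)] with ω hω
  refine congrFun ((TopologicalSpace.denseRange_denseSeq _).equalizer ?_ ?_ (funext fun n ↦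
    (hω n).symm))
  · exact (continuous_dNorm hZ.integrable).comp (by fun_prop)
  · fun_prop

theorem ae_eq_norm_mul (hZ : IsDNormGenerator μ Z) {x : ι → ℝ} (hx : dNorm μ Z x ≤ 1) {i : ι}
    (hi : x i = 1) : (Z · i) =ᵐ[μ] fun ω ↦ ‖x * Z ω‖ := by
  have hle (ω : Ω) : Z ω i ≤ ‖x * Z ω‖ := by
    simpa [hi] using (le_abs_self _).trans (norm_le_pi_norm (x * Z ω) i)
  have hint := integrable_norm_mul hZ.integrable x
  refine (integral_eq_iff_of_ae_le (hZ.integrable.eval i) hint (.of_forall hle)).1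
    (le_antisymm (integral_mono (hZ.integrable.eval i) hint hle) ?_)
  exact hx.trans_eq (hZ.integral_eval i).symm

theorem ae_eq_of_dNorm_mul_eq_norm (hZ : IsDNormGenerator μ Z) {z : ι → ℝ}
    (hz : ∀ x, dNorm μ Z (x * z) = ‖x * z‖) {i j : ι} (hi : z i ≠ 0) (hj : z j ≠ 0) :
    (Z · i) =ᵐ[μ] (Z · j) := by
  have hle : dNorm μ Z (z⁻¹ * z) ≤ 1 := by
    rw [hz, pi_norm_le_iff_of_nonneg zero_le_one]
    intro k
    by_cases hk : z k = 0 <;> simp [hk]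
  exact (hZ.ae_eq_norm_mul hle (inv_mul_cancel₀ hi)).trans
    (hZ.ae_eq_norm_mul hle (inv_mul_cancel₀ hj)).symm

theorem dNormProj_eq_max (hZ : IsDNormGenerator μ Z) {i j : ι} (hij : (Z · i) =ᵐ[μ] (Z · j))
    (x y : ℝ) : dNormProj μ Z i j x y = max |x| |y| := by
  calc dNormProj μ Z i j x y = ∫ ω, max |x| |y| * Z ω i ∂μ := by
        refine integral_congr_ae ?_
        filter_upwards [hij, hZ.nonneg] with ω hω hnonneg
        rw [← hω, max_mul_of_nonneg _ _ (hnonneg i)]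
    _ = max |x| |y| := by rw [integral_const_mul, hZ.integral_eval, mul_one]

end IsDNormGenerator

theorem idempotent_iff_l1_of_no_complete_dependence_general [IsFiniteMeasure μ]
    (hZ : IsDNormGenerator μ Z) (hZ' : IsDNormGenerator μ Z') (hind : Z ⟂ᵢ[μ] Z')
    (hsame : dNorm μ Z' = dNorm μ Z)
    (hproj : Pairwise fun i j ↦ ∃ x y, dNormProj μ Z i j x y ≠ max |x| |y|) :
    dNorm μ (Z * Z') = dNorm μ Z ↔ ∀ x, dNorm μ Z x = ∑ i, |x i| := by
  refine ⟨fun hidem ↦ ?_, fun hl1 ↦ ?_⟩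
  · rw [← hsame, hZ'.dNorm_eq_sum_abs_iff]
    filter_upwards [hZ.ae_forall_dNorm_mul_eq_norm hZ'.integrable hind (hidem.trans hsame.symm)]
      with ω hω i j hij
    by_contra! ⟨hi, hj⟩
    obtain ⟨x, y, hxy⟩ := hproj hij
    exact hxy (hZ.dNormProj_eq_max (hZ.ae_eq_of_dNorm_mul_eq_norm hω hi hj) x y)
  · have hmul : ∀ x, dNorm μ (Z * Z') x = ∑ i, |x i| := by
      rw [(hZ.mul hZ' hind).dNorm_eq_sum_abs_iff]
      filter_upwards [hZ.dNorm_eq_sum_abs_iff.1 hl1] with ω hω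
      exact hω.mono fun i j hij ↦
        hij.imp (mul_eq_zero_of_left · (Z' ω i)) (mul_eq_zero_of_left · (Z' ω j))
    exact funext fun x ↦ (hmul x).trans (hl1 x).symm

end DNorm

/-- If no bivariate projection of a D-norm is the sup-norm, then the D-norm is
idempotent iff it equals the L¹-norm. -/
theorem idempotent_iff_l1_of_no_complete_dependence {d : ℕ} (hd : 0 < d)
    {Ω : Type*} [MeasurableSpace Ω] (μ : Measure Ω) [IsProbabilityMeasure μ]
    (Z Z' : Ω → Fin d → ℝ) (hZm : Measurable Z) (hZ'm : Measurable Z')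
    (hZnn : ∀ i, ∀ᵐ ω ∂μ, 0 ≤ Z ω i)
    (hZint : ∀ i, Integrable (fun ω => Z ω i) μ)
    (hZmean : ∀ i, ∫ ω, Z ω i ∂μ = 1)
    (hindep : IndepFun Z Z' μ) (hid : μ.map Z' = μ.map Z)
    (hproj : ∀ i j : Fin d, i < j → ∃ x y : ℝ,
      (∫ ω, max (|x| * Z ω i) (|y| * Z ω j) ∂μ) ≠ max |x| |y|) :
    (∀ x : Fin d → ℝ,
      (∫ ω, ⨆ i, |x i| * (Z ω i * Z' ω i) ∂μ) = ∫ ω, ⨆ i, |x i| * Z ω i ∂μ) ↔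
    (∀ x : Fin d → ℝ, (∫ ω, ⨆ i, |x i| * Z ω i ∂μ) = ∑ i, |x i|) := by
  have hlaw : IdentDistrib Z' Z μ μ := ⟨hZ'm.aemeasurable, hZm.aemeasurable, hid⟩
  have hZ : IsDNormGenerator μ Z := .of_eval hZnn hZint hZmean
  have hZ' : IsDNormGenerator μ Z' := hZ.of_identDistrib hlaw
  have hpair : Pairwise fun i j ↦ ∃ x y, dNormProj μ Z i j x y ≠ max |x| |y| := fun i j hij ↦ by
    obtain h | h := hij.lt_or_gt
    · exact hproj i j h
    · obtain ⟨x, y, hxy⟩ := hproj j i h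
      exact ⟨y, x, by rwa [dNormProj_swap, max_comm]⟩
  have hmul := (hZ.mul hZ' hindep).integral_iSup_eq_dNorm
  simp only [Pi.mul_apply] at hmul
  simp only [hmul, hZ.integral_iSup_eq_dNorm]
  exact funext_iff.symm.trans (idempotent_iff_l1_of_no_complete_dependence_general hZ hZ' hindep
    (dNorm_eq_of_identDistrib hlaw) hpair)
end

section
/- For arbitrary independent generators Z¹ and Z² on ℝ^d (on a common probability space), the product D-norm dominates both factors: E(max_{1≤i≤d} |x_i| Z¹_i Z²_i) ≥ max( E(max_{1≤i≤d} |x_i| Z¹_i), E(max_{1≤i≤d} |x_i| Z²_i) ) for all x ∈ ℝ^d. -/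
open MeasureTheory ProbabilityTheory

/-!
Condition on the first generator. Given `Z₁`, the conditional Jensen inequality for the maximum
moves the expectation over `Z₂` inside, and by independence each `Z₁ i * Z₂ i` has conditional
expectation `Z₁ i * E (Z₂ i) = Z₁ i`. Taking expectations shows that the product norm dominates the
norm of `Z₁`; the other half follows by symmetry.
-/

section Supremum

variable {ι Ω : Type*} {m m₀ : MeasurableSpace Ω} {μ : Measure Ω} {f : ι → Ω → ℝ}

lemma integrable_iSup [Finite ι] [Nonempty ι] (hf : ∀ i, Integrable (f i) μ) :
    Integrable (fun ω => ⨆ i, f i ω) μ := by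
  have := Fintype.ofFinite ι
  refine (integrable_finsetSum Finset.univ fun i _ => (hf i).abs).mono'
    (AEMeasurable.iSup fun i => (hf i).aemeasurable).aestronglyMeasurable (.of_forall fun ω => ?_)
  obtain ⟨i, hi⟩ := exists_eq_ciSup_of_finite (f := fun i => f i ω)
  rw [← hi, Real.norm_eq_abs]
  exact Finset.single_le_sum (f := fun i => |f i ω|) (fun _ _ => abs_nonneg _) (Finset.mem_univ i)

lemma iSup_condExp_le_condExp_iSup [Countable ι] [Nonempty ι] (hf : ∀ i, Integrable (f i) μ)
    (hf_bdd : ∀ᵐ ω ∂μ, BddAbove (Set.range fun i => f i ω))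
    (hf_sup : Integrable (fun ω => ⨆ i, f i ω) μ) :
    (fun ω => ⨆ i, μ[f i | m] ω) ≤ᵐ[μ] μ[fun ω => ⨆ i, f i ω | m] := by
  have condExp_le (i : ι) : μ[f i | m] ≤ᵐ[μ] μ[fun ω => ⨆ i, f i ω | m] :=
    condExp_mono (hf i) hf_sup (hf_bdd.mono fun _ hω => le_ciSup hω i)
  filter_upwards [ae_all_iff.2 condExp_le] with ω hω
  exact ciSup_le hω

end Supremum

section Independence

variable {ι Ω : Type*} {m₁ m m₀ : MeasurableSpace Ω} {μ : Measure Ω}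

lemma condExp_mul_of_indep (hm₁ : m₁ ≤ m₀) (hm : m ≤ m₀) [SigmaFinite (μ.trim hm)] {f g : Ω → ℝ}
    (hf : AEStronglyMeasurable[m] f μ) (hg : StronglyMeasurable[m₁] g) (hindep : Indep m₁ m μ)
    (hfg_int : Integrable (f * g) μ) (hg_int : Integrable g μ) :
    μ[f * g | m] =ᵐ[μ] fun ω => f ω * ∫ ω', g ω' ∂μ :=
  (condExp_mul_of_aestronglyMeasurable_left hf hfg_int hg_int).trans
    ((Filter.EventuallyEq.refl _ f).mul (condExp_indep_eq hm₁ hm hg hindep))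

lemma iSup_le_condExp_iSup_mul [Countable ι] [Nonempty ι] (hm : m ≤ m₀) [SigmaFinite (μ.trim hm)]
    {X Y : ι → Ω → ℝ} (hX : ∀ i, AEStronglyMeasurable[m] (X i) μ) (hY : ∀ i, Measurable (Y i))
    (hindep : ∀ i, Indep (MeasurableSpace.comap (Y i) inferInstance) m μ)
    (hY_int : ∀ i, Integrable (Y i) μ) (hY_mean : ∀ i, ∫ ω, Y i ω ∂μ = 1)
    (hXY_int : ∀ i, Integrable (X i * Y i) μ)
    (hXY_bdd : ∀ᵐ ω ∂μ, BddAbove (Set.range fun i => X i ω * Y i ω))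
    (hXY_sup : Integrable (fun ω => ⨆ i, X i ω * Y i ω) μ) :
    (fun ω => ⨆ i, X i ω) ≤ᵐ[μ] μ[fun ω => ⨆ i, X i ω * Y i ω | m] := by
  have condExp_eq (i : ι) : μ[X i * Y i | m] =ᵐ[μ] X i := by
    simpa only [hY_mean, mul_one] using
      condExp_mul_of_indep (hY i).comap_le hm (hX i) (comap_measurable (Y i)).stronglyMeasurable
        (hindep i) (hXY_int i) (hY_int i)
  filter_upwards [ae_all_iff.2 condExp_eq, iSup_condExp_le_condExp_iSup hXY_int hXY_bdd hXY_sup]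
    with ω h_eq h_le
  exact (iSup_congr h_eq).symm.trans_le h_le

lemma integral_iSup_le_integral_iSup_mul [Finite ι] [Nonempty ι] [IsFiniteMeasure μ]
    {X Y : Ω → ι → ℝ} (hX : Measurable X) (hY : ∀ i, Measurable fun ω => Y ω i)
    (hX_int : ∀ i, Integrable (fun ω => X ω i) μ) (hY_int : ∀ i, Integrable (fun ω => Y ω i) μ)
    (hY_mean : ∀ i, ∫ ω, Y ω i ∂μ = 1) (hindep : ∀ i, IndepFun X (fun ω => Y ω i) μ) :
    ∫ ω, ⨆ i, X ω i ∂μ ≤ ∫ ω, ⨆ i, X ω i * Y ω i ∂μ := by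
  have hXY_int (i : ι) : Integrable (fun ω => X ω i * Y ω i) μ :=
    ((hindep i).comp (measurable_pi_apply i) measurable_id).integrable_mul (hX_int i) (hY_int i)
  have hX_comap (i : ι) : AEStronglyMeasurable[MeasurableSpace.comap X inferInstance]
      (fun ω => X ω i) μ :=
    ((measurable_pi_apply i).comp (comap_measurable X)).aestronglyMeasurable
  have h_le := iSup_le_condExp_iSup_mul hX.comap_le hX_comap hY
    (fun i => (IndepFun_iff_Indep _ _ _).1 (hindep i).symm) hY_int hY_mean hXY_int
    (.of_forall fun _ => (Set.finite_range _).bddAbove) (integrable_iSup hXY_int)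
  calc ∫ ω, ⨆ i, X ω i ∂μ
      ≤ ∫ ω, μ[fun ω => ⨆ i, X ω i * Y ω i | MeasurableSpace.comap X inferInstance] ω ∂μ :=
        integral_mono_ae (integrable_iSup hX_int) integrable_condExp h_le
    _ = ∫ ω, ⨆ i, X ω i * Y ω i ∂μ := integral_condExp hX.comap_le

lemma integral_iSup_mul_le_integral_iSup_mul_mul [Finite ι] [Nonempty ι] [IsFiniteMeasure μ]
    {X Y : Ω → ι → ℝ} (hX : Measurable X) (hY : ∀ i, Measurable fun ω => Y ω i)
    (hX_int : ∀ i, Integrable (fun ω => X ω i) μ) (hY_int : ∀ i, Integrable (fun ω => Y ω i) μ)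
    (hY_mean : ∀ i, ∫ ω, Y ω i ∂μ = 1) (hindep : ∀ i, IndepFun X (fun ω => Y ω i) μ) (c : ι → ℝ) :
    ∫ ω, ⨆ i, c i * X ω i ∂μ ≤ ∫ ω, ⨆ i, c i * (X ω i * Y ω i) ∂μ := by
  have hc : Measurable fun (z : ι → ℝ) i => c i * z i := by fun_prop
  simpa only [Function.comp_apply, mul_assoc] using
    integral_iSup_le_integral_iSup_mul (hc.comp hX) hY (fun i => (hX_int i).const_mul (c i))
      hY_int hY_mean fun i => (hindep i).comp hc measurable_id

end Independence

theorem dNorm_mul_dominates_general {ι Ω : Type*} [Finite ι] [Nonempty ι] [MeasurableSpace Ω]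
    (μ : Measure Ω) [IsFiniteMeasure μ] (Z₁ Z₂ : Ω → ι → ℝ)
    (hZ₁m : Measurable Z₁) (hZ₂m : Measurable Z₂)
    (hZ₁int : ∀ i, Integrable (fun ω => Z₁ ω i) μ)
    (hZ₂int : ∀ i, Integrable (fun ω => Z₂ ω i) μ)
    (hZ₁mean : ∀ i, ∫ ω, Z₁ ω i ∂μ = 1) (hZ₂mean : ∀ i, ∫ ω, Z₂ ω i ∂μ = 1)
    (hindep : IndepFun Z₁ Z₂ μ) (c : ι → ℝ) :
    max (∫ ω, ⨆ i, c i * Z₁ ω i ∂μ) (∫ ω, ⨆ i, c i * Z₂ ω i ∂μ) ≤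
      ∫ ω, ⨆ i, c i * (Z₁ ω i * Z₂ ω i) ∂μ := by
  refine max_le ?_ ?_
  · exact integral_iSup_mul_le_integral_iSup_mul_mul hZ₁m (measurable_pi_iff.1 hZ₂m) hZ₁int hZ₂int
      hZ₂mean (fun i => hindep.comp measurable_id (measurable_pi_apply i)) c
  · simpa only [mul_comm (Z₂ _ _)] using
      integral_iSup_mul_le_integral_iSup_mul_mul hZ₂m (measurable_pi_iff.1 hZ₁m) hZ₂int hZ₁int
        hZ₁mean (fun i => hindep.symm.comp measurable_id (measurable_pi_apply i)) c

/-- The product D-norm dominates both of its factors. -/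
theorem dNorm_mul_dominates {d : ℕ} (hd : 0 < d)
    {Ω : Type*} [MeasurableSpace Ω] (μ : Measure Ω) [IsProbabilityMeasure μ]
    (Z₁ Z₂ : Ω → Fin d → ℝ) (hZ₁m : Measurable Z₁) (hZ₂m : Measurable Z₂)
    (hZ₁nn : ∀ i, ∀ᵐ ω ∂μ, 0 ≤ Z₁ ω i) (hZ₂nn : ∀ i, ∀ᵐ ω ∂μ, 0 ≤ Z₂ ω i)
    (hZ₁int : ∀ i, Integrable (fun ω => Z₁ ω i) μ)
    (hZ₂int : ∀ i, Integrable (fun ω => Z₂ ω i) μ)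
    (hZ₁mean : ∀ i, ∫ ω, Z₁ ω i ∂μ = 1) (hZ₂mean : ∀ i, ∫ ω, Z₂ ω i ∂μ = 1)
    (hindep : IndepFun Z₁ Z₂ μ) :
    ∀ x : Fin d → ℝ,
      max (∫ ω, ⨆ i, |x i| * Z₁ ω i ∂μ) (∫ ω, ⨆ i, |x i| * Z₂ ω i ∂μ) ≤
        ∫ ω, ⨆ i, |x i| * (Z₁ ω i * Z₂ ω i) ∂μ := by
  have : Nonempty (Fin d) := Fin.pos_iff_nonempty.1 hd
  exact fun x => dNorm_mul_dominates_general μ Z₁ Z₂ hZ₁m hZ₂m hZ₁int hZ₂int hZ₁mean hZ₂mean hindep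
    fun i => |x i|
end
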